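/- Let ψ be a 3CNF formula with n propositional variables and m clauses, where clause j consists of three literals ℓ_{j,1}, ℓ_{j,2}, ℓ_{j,3}, each a pair of a variable index i ∈ {1,…,n} and a sign. For x ∈ ℝⁿ let val_{j,k}(x) = x_i if literal ℓ_{j,k} is the positive literal of variable i and val_{j,k}(x) = 1 − x_i if it is the negative literal of variable i, and define N'(x) = Σ_{i=1}^{n} (ReLU(1/2 − x_i) + ReLU(x_i − 1/2)) − Σ_{j=1}^{m} ReLU(1 − val_{j,1}(x) − val_{j,2}(x) − val_{j,3}(x)). Then there exists x ∈ ℝⁿ with 0 ≤ x_i ≤ 1 for all i and N'(x) = n/2, if and only if ψ is satisfiable, i.e., there is an assignment α : {1,…,n} → {0,1} such that every clause contains a literal whose variable is assigned 1 if the literal is positive and 0 if it is negative. -/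

import Mathlib

/-- The ReLU function. -/
noncomputable def ReLU (x : ℝ) : ℝ := max 0 x

/-- The real value of a literal (a variable index together with a sign, `true`
meaning positive) under a real-valued input `x`: `x i` for the positive
literal of variable `i` and `1 - x i` for the negative one. -/
noncomputable def litVal {n : ℕ} (ℓ : Fin n × Bool) (x : Fin n → ℝ) : ℝ :=
  if ℓ.2 then x ℓ.1 else 1 - x ℓ.1

/-- A boolean assignment satisfies a literal if the variable is assigned `true`
(i.e. 1) when the literal is positive and `false` (i.e. 0) when it is negative. -/
def litSat {n : ℕ} (ℓ : Fin n × Bool) (α : Fin n → Bool) : Prop :=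
  α ℓ.1 = ℓ.2

/-- The single-hidden-layer network `N'` built from a 3CNF formula with `n`
variables and `m` clauses given by `lit`. -/
noncomputable def N' {n m : ℕ} (lit : Fin m → Fin 3 → Fin n × Bool)
    (x : Fin n → ℝ) : ℝ :=
  (∑ i : Fin n, (ReLU (1/2 - x i) + ReLU (x i - 1/2))) -
    ∑ j : Fin m,
      ReLU (1 - litVal (lit j 0) x - litVal (lit j 1) x - litVal (lit j 2) x)

theorem ReLU_nonneg (x : ℝ) : 0 ≤ ReLU x := le_max_left _ _

theorem ReLU_eq_zero_iff {x : ℝ} : ReLU x = 0 ↔ x ≤ 0 := max_eq_left_iff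

theorem ReLU_neg_add_ReLU (x : ℝ) : ReLU (1/2 - x) + ReLU (x - 1/2) = |x - 1/2| := by
  unfold ReLU
  rcases le_total x (1/2) with h | h
  · rw [max_eq_right (by linarith), max_eq_left (by linarith), abs_of_nonpos (by linarith)]
    ring
  · rw [max_eq_left (by linarith), max_eq_right (by linarith), abs_of_nonneg (by linarith)]
    ring

theorem abs_sub_half_le {x : ℝ} (h : 0 ≤ x ∧ x ≤ 1) : |x - 1/2| ≤ 1/2 :=
  abs_le.2 ⟨by linarith [h.1], by linarith [h.2]⟩

theorem abs_sub_half_eq_iff {x : ℝ} : |x - 1/2| = 1/2 ↔ x = 0 ∨ x = 1 := by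
  rw [abs_eq (by norm_num), or_comm]
  exact or_congr ⟨fun h => by linarith, fun h => by linarith⟩
    ⟨fun h => by linarith, fun h => by linarith⟩

/-- On the unit cube, the value `n / 2` is attained exactly at the vertices where no clause is
penalised. -/
theorem N'_eq_half_iff {n m : ℕ} (lit : Fin m → Fin 3 → Fin n × Bool) {x : Fin n → ℝ}
    (hx : ∀ i, 0 ≤ x i ∧ x i ≤ 1) :
    N' lit x = n / 2 ↔ (∀ i, x i = 0 ∨ x i = 1) ∧
      ∀ j, 1 ≤ litVal (lit j 0) x + litVal (lit j 1) x + litVal (lit j 2) x := by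
  have hhalf : ∑ _i : Fin n, (1/2 : ℝ) = n / 2 := by
    simp [div_eq_mul_inv]
  have hle : ∀ i ∈ Finset.univ, |x i - 1/2| ≤ 1/2 := fun i _ => abs_sub_half_le (hx i)
  have hclause : ∀ j ∈ Finset.univ,
      0 ≤ ReLU (1 - litVal (lit j 0) x - litVal (lit j 1) x - litVal (lit j 2) x) :=
    fun j _ => ReLU_nonneg _
  have hvars : ∑ i, |x i - 1/2| = n / 2 ↔ ∀ i, x i = 0 ∨ x i = 1 := by
    rw [← hhalf, Finset.sum_eq_sum_iff_of_le hle]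
    simp only [Finset.mem_univ, true_imp_iff, abs_sub_half_eq_iff]
  have hclauses : ∑ j, ReLU (1 - litVal (lit j 0) x - litVal (lit j 1) x - litVal (lit j 2) x) = 0 ↔
      ∀ j, 1 ≤ litVal (lit j 0) x + litVal (lit j 1) x + litVal (lit j 2) x := by
    rw [Finset.sum_eq_zero_iff_of_nonneg hclause]
    simp only [Finset.mem_univ, true_imp_iff, ReLU_eq_zero_iff]
    exact forall_congr' fun j => ⟨fun h => by linarith, fun h => by linarith⟩
  rw [← hvars, ← hclauses]
  have hsum := Finset.sum_le_sum hle
  have hnonneg := Finset.sum_nonneg hclause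
  rw [hhalf] at hsum
  simp only [N', ReLU_neg_add_ReLU]
  exact ⟨fun h => ⟨by linarith, by linarith⟩, fun h => by linarith [h.1, h.2]⟩

/-- At a boolean point, a literal has value one if it is satisfied and zero otherwise. -/
theorem litVal_boolean {n : ℕ} (ℓ : Fin n × Bool) (α : Fin n → Bool) :
    litVal ℓ (fun i => if α i then 1 else 0) = if α ℓ.1 = ℓ.2 then 1 else 0 := by
  rcases ℓ with ⟨i, s⟩
  cases s <;> cases h : α i <;> simp [litVal, h]

theorem one_le_sum_litVal_boolean_iff {n : ℕ} (c : Fin 3 → Fin n × Bool) (α : Fin n → Bool) :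
    1 ≤ litVal (c 0) (fun i => if α i then 1 else 0) +
        litVal (c 1) (fun i => if α i then 1 else 0) +
        litVal (c 2) (fun i => if α i then 1 else 0) ↔
      ∃ k, litSat (c k) α := by
  simp only [litVal_boolean, litSat, Fin.exists_fin_succ, Fin.exists_fin_zero]
  change _ ↔ α (c 0).1 = (c 0).2 ∨ α (c 1).1 = (c 1).2 ∨ α (c 2).1 = (c 2).2 ∨ False
  split_ifs <;> simp_all

theorem stmt_6 (n m : ℕ) (lit : Fin m → Fin 3 → Fin n × Bool) :
    (∃ x : Fin n → ℝ, (∀ i : Fin n, 0 ≤ x i ∧ x i ≤ 1) ∧ N' lit x = n / 2) ↔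
    (∃ α : Fin n → Bool, ∀ j : Fin m, ∃ k : Fin 3, litSat (lit j k) α) := by
  constructor
  · rintro ⟨x, hx, hN⟩
    obtain ⟨hbool, hclause⟩ := (N'_eq_half_iff lit hx).1 hN
    have hxα : x = fun i => if decide (x i = 1) then 1 else 0 := by
      funext i
      rcases hbool i with h | h <;> simp [h]
    refine ⟨fun i => decide (x i = 1), fun j => ?_⟩
    rw [← one_le_sum_litVal_boolean_iff, ← hxα]
    exact hclause j
  · rintro ⟨α, hα⟩
    have hbool : ∀ i, (if α i then (1 : ℝ) else 0) = 0 ∨ (if α i then (1 : ℝ) else 0) = 1 := by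
      intro i
      cases α i <;> simp
    have hx : ∀ i, 0 ≤ (if α i then (1 : ℝ) else 0) ∧ (if α i then (1 : ℝ) else 0) ≤ 1 := by
      intro i
      cases α i <;> simp
    exact ⟨_, hx, (N'_eq_half_iff lit hx).2
      ⟨hbool, fun j => (one_le_sum_litVal_boolean_iff (lit j) α).2 (hα j)⟩⟩
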